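/- Let s ∈ (0, 1/2], ε₁ > 0, p > 0, T > 0, and let θ be a classical solution of the regularized fractional Burgers equation with viscosity ε₁ on ℝ × (0, T]. Define F(x,t) = t^{1/p} θ(x,t). Suppose F attains its supremum over ℝ × (0, T] at a point (x₀, t₀) with t₀ ∈ (0, T] and F(x₀, t₀) > 0. Then C_s ∫_ℝ (F(x₀, t₀) − F(y, t₀)) / |x₀ − y|^{1+2s} dy ≤ F(x₀, t₀) / (p t₀). -/

import Mathlib

open MeasureTheory Real Set Filter

/-- The normalizing constant of the 1-D fractional Laplacian. -/
noncomputable def fracC (s : ℝ) : ℝ :=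
  (4 : ℝ) ^ s * Real.Gamma (1 / 2 + s) / (Real.sqrt Real.pi * |Real.Gamma (-s)|)

/-- The fractional Laplacian `(-Δ)^s u (x)`. -/
noncomputable def fracLap (s : ℝ) (u : ℝ → ℝ) (x : ℝ) : ℝ :=
  fracC s * ∫ y : ℝ, (u x - u y) / |x - y| ^ (1 + 2 * s)

/-- A classical solution of the regularized fractional Burgers equation
`θ_t + θ θ_x + (-Δ)^s θ - ε₁ θ_xx = 0` on a set `D ⊆ ℝ × ℝ` (points written `(x, t)`):
a bounded continuous function, continuously differentiable in `t` and twice continuously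
differentiable in `x`, satisfying the equation at every point of `D`, where the fractional
Laplacian (acting in `x`) is given by an absolutely convergent integral. -/
structure IsClassicalSolution (s ε₁ : ℝ) (θ : ℝ → ℝ → ℝ) (D : Set (ℝ × ℝ)) : Prop where
  bounded : ∃ B : ℝ, ∀ p ∈ D, |θ p.1 p.2| ≤ B
  cont : ContinuousOn (fun p : ℝ × ℝ => θ p.1 p.2) D
  diff_t : ∀ p ∈ D, DifferentiableAt ℝ (fun t => θ p.1 t) p.2
  cont_dt : ContinuousOn (fun p : ℝ × ℝ => deriv (fun t => θ p.1 t) p.2) D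
  diff_x : ∀ p ∈ D, DifferentiableAt ℝ (fun x => θ x p.2) p.1
  diff_xx : ∀ p ∈ D, DifferentiableAt ℝ (deriv fun x => θ x p.2) p.1
  cont_dx : ContinuousOn (fun p : ℝ × ℝ => deriv (fun x => θ x p.2) p.1) D
  cont_dxx : ContinuousOn (fun p : ℝ × ℝ => deriv (deriv fun x => θ x p.2) p.1) D
  integrable : ∀ p ∈ D,
    Integrable fun y : ℝ => (θ p.1 p.2 - θ y p.2) / |p.1 - y| ^ (1 + 2 * s)
  eqn : ∀ p ∈ D,
    deriv (fun t => θ p.1 t) p.2 + θ p.1 p.2 * deriv (fun x => θ x p.2) p.1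
      + fracLap s (fun x => θ x p.2) p.1
      - ε₁ * deriv (deriv fun x => θ x p.2) p.1 = 0

/-! Multiply the equation by the weight `w t₀` and read it off for `F(x, t) = w t * θ x t`: the
transport term is `θ F_x`, the viscous term is `-ε₁ F_xx`, and `w θ_t = F_t - w' θ`. At a maximum
of `F` one has `F_x = 0`, `F_xx ≤ 0`, and `F_t ≥ 0` (only times before `t₀` are compared, since
`t₀` may be the final time), so `(-Δ)^s F = ε₁ F_xx - F_t + w' θ ≤ w' θ`. For `w t = t ^ (1 / p)`
the right-hand side is `F / (p t₀)`. -/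

theorem deriv_deriv_nonpos_of_isLocalMax {f : ℝ → ℝ} {a : ℝ} (hmax : IsLocalMax f a)
    (hf : ContinuousAt f a) : deriv (deriv f) a ≤ 0 := by
  by_contra! hpos
  have hmin : IsLocalMin f a := isLocalMin_of_deriv_deriv_pos hpos hmax.deriv_eq_zero hf
  have hconst : f =ᶠ[nhds a] fun _ => f a := by
    filter_upwards [hmax, hmin] with x hle hge using le_antisymm hle hge
  have hzero : deriv (deriv f) a = 0 := by simp [hconst.deriv.deriv_eq]
  exact hpos.ne' hzero

theorem nonneg_of_isLocalMaxOn_Iic_of_hasDerivWithinAt {f : ℝ → ℝ} {f' a : ℝ}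
    (hmax : IsLocalMaxOn f (Iic a) a) (hf : HasDerivWithinAt f f' (Iic a) a) : 0 ≤ f' := by
  have hcone : (-1 : ℝ) ∈ posTangentConeAt (Iic a) a :=
    mem_posTangentConeAt_of_segment_subset <|
      (convex_Iic a).segment_subset self_mem_Iic (by simp)
  simpa using hmax.hasFDerivWithinAt_nonpos hf.hasFDerivWithinAt hcone

theorem fracLap_const_mul (s c : ℝ) (u : ℝ → ℝ) (x : ℝ) :
    fracLap s (fun y => c * u y) x = c * fracLap s u x := by
  simp only [fracLap, ← mul_sub, mul_div_assoc, integral_const_mul, mul_left_comm]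

theorem hasDerivAt_rpow_one_div {t : ℝ} (p : ℝ) (ht : t ≠ 0) :
    HasDerivAt (fun τ => τ ^ (1 / p)) (t ^ (1 / p) / (p * t)) t := by
  convert hasDerivAt_rpow_const (p := 1 / p) (Or.inl ht) using 1
  rw [rpow_sub_one ht, div_mul_div_comm, one_mul]

theorem fracLap_bound_at_max_general {s ε₁ : ℝ} {θ : ℝ → ℝ → ℝ} {D : Set (ℝ × ℝ)} {w : ℝ → ℝ}
    {w' x₀ t₀ : ℝ} (hsol : IsClassicalSolution s ε₁ θ D) (hε₁ : 0 ≤ ε₁) (hmem : (x₀, t₀) ∈ D)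
    (hw : HasDerivWithinAt w w' (Iic t₀) t₀)
    (hmax_x : IsLocalMax (fun x => w t₀ * θ x t₀) x₀)
    (hmax_t : IsLocalMaxOn (fun t => w t * θ x₀ t) (Iic t₀) t₀) :
    fracLap s (fun x => w t₀ * θ x t₀) x₀ ≤ w' * θ x₀ t₀ := by
  have hFx : w t₀ * deriv (fun x => θ x t₀) x₀ = 0 := by
    simpa only [deriv_const_mul_field] using hmax_x.deriv_eq_zero
  have hFxx : w t₀ * deriv (deriv fun x => θ x t₀) x₀ ≤ 0 := by
    have hcont := (hsol.diff_x _ hmem).continuousAt.const_mul (w t₀)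
    simpa only [deriv_const_mul_field'] using deriv_deriv_nonpos_of_isLocalMax hmax_x hcont
  have hFt : 0 ≤ w' * θ x₀ t₀ + w t₀ * deriv (fun t => θ x₀ t) t₀ :=
    nonneg_of_isLocalMaxOn_Iic_of_hasDerivWithinAt hmax_t <|
      hw.mul (hsol.diff_t _ hmem).hasDerivAt.hasDerivWithinAt
  have hvisc : ε₁ * (w t₀ * deriv (deriv fun x => θ x t₀) x₀) ≤ 0 :=
    mul_nonpos_of_nonneg_of_nonpos hε₁ hFxx
  rw [fracLap_const_mul]
  linear_combination hFt + hvisc + w t₀ * hsol.eqn _ hmem - θ x₀ t₀ * hFx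

/-- at a positive maximum of `F(x,t) = t^{1/p} θ(x,t)` over `ℝ × (0,T]`,
the fractional Laplacian of `F(·,t₀)` at `x₀` is at most `F(x₀,t₀)/(p t₀)`. -/
theorem fracLap_bound_at_max (s ε₁ p T : ℝ) (θ : ℝ → ℝ → ℝ)
    (hs : 0 < s) (hs' : s ≤ 1 / 2) (hε₁ : 0 < ε₁) (hp : 0 < p) (hT : 0 < T)
    (hsol : IsClassicalSolution s ε₁ θ {q : ℝ × ℝ | 0 < q.2 ∧ q.2 ≤ T})
    (x₀ t₀ : ℝ) (ht₀ : 0 < t₀) (ht₀T : t₀ ≤ T)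
    (hmax : ∀ x t : ℝ, 0 < t → t ≤ T →
      t ^ (1 / p) * θ x t ≤ t₀ ^ (1 / p) * θ x₀ t₀)
    (hpos : 0 < t₀ ^ (1 / p) * θ x₀ t₀) :
    fracC s * ∫ y : ℝ,
        (t₀ ^ (1 / p) * θ x₀ t₀ - t₀ ^ (1 / p) * θ y t₀) / |x₀ - y| ^ (1 + 2 * s)
      ≤ (t₀ ^ (1 / p) * θ x₀ t₀) / (p * t₀) := by
  have hmax_t : IsLocalMaxOn (fun t => t ^ (1 / p) * θ x₀ t) (Iic t₀) t₀ := by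
    filter_upwards [Ioc_mem_nhdsLE ht₀] with t ht using hmax x₀ t ht.1 (ht.2.trans ht₀T)
  have hmax_x : IsLocalMax (fun x => t₀ ^ (1 / p) * θ x t₀) x₀ :=
    Eventually.of_forall fun x => hmax x t₀ ht₀ ht₀T
  have hw := (hasDerivAt_rpow_one_div p ht₀.ne').hasDerivWithinAt (s := Iic t₀)
  exact (fracLap_bound_at_max_general hsol hε₁.le ⟨ht₀, ht₀T⟩ hw hmax_x hmax_t).trans_eq
    (div_mul_eq_mul_div _ _ _)
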